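/- arXiv:2102.09070 — 2 statements merged into one kernel-verified Lean document; each statement's English description precedes it below -/
import Mathlib

section
/- Let p be a prime and x ∈ ℤ_p a p-adic integer with Diophantine exponent τ(x), and let τ ∈ ℝ satisfy max{1, τ(x)−1} < τ < τ(x). Then for every ε > 0 there exists N₀ ∈ ℕ such that for all N ≥ N₀, the number of pairs (q₀, q₁) ∈ ℤ² with 0 < q₀ ≤ N, |q₁| ≤ N and |q₀x − q₁|_p < N^{−τ} is at most N^{τ(x) − τ + ε}. -/
/-!
Write `t = dioExp1 x`. The set of `(q₀, q₁)` with `|q₀ x - q₁|_p < N ^ (-τ)` is closed under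
subtraction, so two distinct counted pairs at sup-distance at most `M` would produce an
approximation of height `M` and quality `N ^ (-τ)`. Fix `t' > t` and let `M ≈ N ^ (τ / t')`; then
`N ^ (-τ) ≤ M ^ (-t')`, which for large `M` is impossible because `t'` exceeds the exponent of `x`.
Hence every square cell of side `M` contains at most one counted pair, and there are
`O((N / M) ^ 2) = O(N ^ (2 - 2 τ / t'))` cells meeting the box.

By the pigeonhole principle (Dirichlet) `t ≥ 2`, so `2 - 2 τ / t' = (2 / t') (t' - τ) ≤ t' - τ`,
and `t' = t + ε / 2` leaves a factor `N ^ (ε / 2)` to absorb the constant. Finally, `t > 1` rules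
out the junk value `sSup = 0` of an unbounded set, so `t` is a genuine supremum.
-/

open scoped BigOperators

/-- The Diophantine exponent of a `p`-adic integer `x`:
`τ(x) := sup { τ : |q₀x − q₁|_p < Q^{−τ} has solutions with 0 < q₀ ≤ Q, |q₁| ≤ Q
for infinitely many Q ∈ ℕ }`. -/
noncomputable def dioExp1 {p : ℕ} [Fact p.Prime] (x : ℤ_[p]) : ℝ :=
  sSup {τ : ℝ | ∀ Q₀ : ℕ, ∃ Q : ℕ, Q₀ ≤ Q ∧ ∃ q₀ q₁ : ℤ,
    0 < q₀ ∧ q₀ ≤ (Q : ℤ) ∧ |q₁| ≤ (Q : ℤ) ∧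
    ‖(q₀ : ℤ_[p]) * x - (q₁ : ℤ_[p])‖ < (Q : ℝ) ^ (-τ)}

/-- `x` has an approximation of height at most `Q` and quality better than `Q ^ (-σ)`. -/
def HasApprox {p : ℕ} [Fact p.Prime] (x : ℤ_[p]) (σ : ℝ) (Q : ℕ) : Prop :=
  ∃ q₀ q₁ : ℤ, 0 < q₀ ∧ q₀ ≤ (Q : ℤ) ∧ |q₁| ≤ (Q : ℤ) ∧
    ‖(q₀ : ℤ_[p]) * x - (q₁ : ℤ_[p])‖ < (Q : ℝ) ^ (-σ)

theorem one_le_abs_mul_norm {p : ℕ} [Fact p.Prime] {b : ℤ} (hb : b ≠ 0) :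
    1 ≤ (|b| : ℝ) * ‖(b : ℤ_[p])‖ := by
  have hp : (0 : ℝ) < p := by exact_mod_cast (Fact.out : p.Prime).pos
  have hb' : (b : ℤ_[p]) ≠ 0 := by exact_mod_cast hb
  have h := PadicInt.norm_eq_zpow_neg_valuation hb'
  have hd := PadicInt.norm_int_le_pow_iff_dvd.1 h.le
  have hle := Int.le_of_dvd (abs_pos.2 hb) ((dvd_abs _ _).2 hd)
  have hpow : (p : ℝ) ^ (b : ℤ_[p]).valuation ≤ |(b : ℝ)| := by exact_mod_cast hle
  rw [h, zpow_neg, zpow_natCast, ← div_eq_mul_inv, one_le_div (by positivity)]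
  exact hpow

/-- The sign condition `0 < q₀` costs nothing: replace a pair by its negative if necessary; the
case `q₀ = 0` cannot occur, since a nonzero integer `b` satisfies `|b|_p ≥ 1 / |b|`. -/
theorem hasApprox_of_ne {p : ℕ} [Fact p.Prime] {x : ℤ_[p]} {Q : ℕ} {σ : ℝ} (hσ : 1 ≤ σ)
    {a b : ℤ} (hne : a ≠ 0 ∨ b ≠ 0) (ha : |a| ≤ (Q : ℤ)) (hb : |b| ≤ (Q : ℤ))
    (h : ‖(a : ℤ_[p]) * x - (b : ℤ_[p])‖ < (Q : ℝ) ^ (-σ)) : HasApprox x σ Q := by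
  rcases lt_trichotomy a 0 with h0 | h0 | h0
  · refine ⟨-a, -b, by omega, by have := abs_le.1 ha; omega, by rwa [abs_neg], ?_⟩
    have e : ((-a : ℤ) : ℤ_[p]) * x - ((-b : ℤ) : ℤ_[p]) = -((a : ℤ_[p]) * x - b) := by
      push_cast
      ring
    rwa [e, norm_neg]
  · subst h0
    have hb0 : b ≠ 0 := by simpa using hne
    have hQ : 1 ≤ Q := by have := abs_pos.2 hb0; omega
    have hQ' : (1 : ℝ) ≤ Q := by exact_mod_cast hQ
    have h1 := one_le_abs_mul_norm (p := p) hb0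
    have h2 : (Q : ℝ) ^ (-σ) ≤ (Q : ℝ) ^ (-1 : ℝ) :=
      Real.rpow_le_rpow_of_exponent_le hQ' (by linarith)
    have h3 : ‖(b : ℤ_[p])‖ < (Q : ℝ)⁻¹ := by
      have : ‖(b : ℤ_[p])‖ < (Q : ℝ) ^ (-σ) := by simpa using h
      rw [Real.rpow_neg_one] at h2
      linarith
    have h4 : |(b : ℝ)| ≤ Q := by exact_mod_cast hb
    have h5 : |(b : ℝ)| * ‖(b : ℤ_[p])‖ < 1 := by
      calc |(b : ℝ)| * ‖(b : ℤ_[p])‖ ≤ Q * ‖(b : ℤ_[p])‖ := by gcongr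
        _ < Q * (Q : ℝ)⁻¹ := by gcongr
        _ = 1 := by field_simp
    exact absurd h1 (not_le.2 h5)
  · exact ⟨a, b, h0, by rwa [abs_of_pos h0] at ha, hb, h⟩

/-- Dirichlet's theorem: for `k` with `p ^ k ≤ Q ^ 2 < p ^ (k + 1)` the `(Q + 1) ^ 2` values
`a x - b` with `0 ≤ a, b ≤ Q` cannot all be distinct modulo `p ^ k`. -/
theorem hasApprox_of_large {p : ℕ} [Fact p.Prime] (x : ℤ_[p]) {Q : ℕ} {σ : ℝ} (hσ : 1 ≤ σ)
    (hQ : 1 ≤ Q) (hQp : (p : ℝ) ≤ (Q : ℝ) ^ (2 - σ)) : HasApprox x σ Q := by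
  have hp1 : 1 < p := (Fact.out : p.Prime).one_lt
  have hQ0 : (0 : ℝ) < Q := by exact_mod_cast hQ
  set k := Nat.log p (Q ^ 2) with hk
  have hk1 : p ^ k ≤ Q ^ 2 := Nat.pow_log_le_self p (by positivity)
  have hk2 : Q ^ 2 < p ^ (k + 1) := Nat.lt_pow_succ_log_self hp1 _
  have : NeZero (p ^ k) := ⟨by positivity⟩
  let f : ℕ × ℕ → ZMod (p ^ k) := fun c =>
    PadicInt.toZModPow k ((c.1 : ℤ_[p]) * x - (c.2 : ℤ_[p]))
  obtain ⟨c, hc, d, hd, hcd, hf⟩ := Finset.exists_ne_map_eq_of_card_lt_of_maps_to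
    (s := Finset.range (Q + 1) ×ˢ Finset.range (Q + 1)) (t := Finset.univ) (f := f)
    (by
      rw [Finset.card_univ, ZMod.card, Finset.card_product, Finset.card_range]
      nlinarith) (fun _ _ => Finset.mem_coe.2 (Finset.mem_univ _))
  simp only [Finset.mem_product, Finset.mem_range] at hc hd
  have hker : ((c.1 : ℤ_[p]) * x - (c.2 : ℤ_[p])) - ((d.1 : ℤ_[p]) * x - (d.2 : ℤ_[p])) ∈
      RingHom.ker (PadicInt.toZModPow (p := p) k) := by
    rw [RingHom.mem_ker, map_sub, sub_eq_zero]
    exact hf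
  rw [PadicInt.ker_toZModPow, ← PadicInt.norm_le_pow_iff_mem_span_pow] at hker
  refine hasApprox_of_ne hσ (a := (c.1 : ℤ) - d.1) (b := (c.2 : ℤ) - d.2) ?_
    (abs_le.2 ⟨by omega, by omega⟩) (abs_le.2 ⟨by omega, by omega⟩) ?_
  · by_contra! h
    exact hcd (Prod.ext (by omega) (by omega))
  · have hp0 : (0 : ℝ) < p := by positivity
    have hk2' : (Q : ℝ) ^ 2 < (p : ℝ) ^ k * p := by
      rw [← pow_succ]
      exact_mod_cast hk2
    calc _ = ‖((c.1 : ℤ_[p]) * x - (c.2 : ℤ_[p])) - ((d.1 : ℤ_[p]) * x - (d.2 : ℤ_[p]))‖ := by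
            congr 1
            push_cast
            ring
      _ ≤ ((p : ℝ) ^ k)⁻¹ := by simpa [zpow_neg] using hker
      _ < p / (Q : ℝ) ^ 2 := by
            rw [inv_eq_one_div, div_lt_div_iff₀ (by positivity) (by positivity)]
            linarith
      _ ≤ (Q : ℝ) ^ (2 - σ) / (Q : ℝ) ^ 2 := by gcongr
      _ = (Q : ℝ) ^ (-σ) := by
            rw [← Real.rpow_natCast (Q : ℝ) 2, ← Real.rpow_sub hQ0]
            congr 1
            push_cast
            ring

/-- If no approximation of height `M` has quality `M ^ (-σ)`, then each cell of side `M` contains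
at most one pair counted at level `N`, so that their number is at most the number of cells. -/
theorem ncard_le_of_not_hasApprox {p : ℕ} [Fact p.Prime] {x : ℤ_[p]} {τ σ : ℝ} {M N : ℕ}
    (hσ : 1 ≤ σ) (hM : 1 ≤ M) (hMN : M ≤ N) (hq : (N : ℝ) ^ (-τ) ≤ (M : ℝ) ^ (-σ))
    (hno : ¬ HasApprox x σ M) :
    {q : ℤ × ℤ | 0 < q.1 ∧ q.1 ≤ (N : ℤ) ∧ |q.2| ≤ (N : ℤ) ∧
        ‖(q.1 : ℤ_[p]) * x - (q.2 : ℤ_[p])‖ < (N : ℝ) ^ (-τ)}.ncard ≤ 8 * (N / M) ^ 2 := by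
  set K := N / M with hK
  have hK1 : 1 ≤ K := Nat.div_pos hMN hM
  have hNK : (N : ℤ) < ((K : ℤ) + 1) * M := by
    have := Nat.lt_mul_div_succ N hM
    rw [← hK, mul_comm] at this
    exact_mod_cast this
  have hM' : (0 : ℤ) < M := by exact_mod_cast hM
  let t : Finset (ℤ × ℤ) := Finset.Icc 0 (K : ℤ) ×ˢ Finset.Icc (-(K : ℤ) - 1) (K : ℤ)
  have hcard : t.card ≤ 8 * K ^ 2 := by
    have h1 : ((K : ℤ) + 1 - 0).toNat = K + 1 := by omega
    have h2 : ((K : ℤ) + 1 - (-(K : ℤ) - 1)).toNat = 2 * K + 2 := by omega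
    rw [Finset.card_product, Int.card_Icc, Int.card_Icc, h1, h2]
    nlinarith
  refine le_trans ?_ hcard
  rw [← Set.ncard_coe_finset t]
  refine Set.ncard_le_ncard_of_injOn (fun q => (q.1 / (M : ℤ), q.2 / (M : ℤ))) ?_ ?_
    t.finite_toSet
  · rintro ⟨a, b⟩ ⟨h1, h2, h3, -⟩
    simp only at h1 h2 h3
    obtain ⟨h3, h4⟩ := abs_le.1 h3
    simp only [t, Finset.coe_product, Finset.coe_Icc, Set.mem_prod, Set.mem_Icc]
    refine ⟨⟨Int.ediv_nonneg h1.le hM'.le, ?_⟩, ?_, ?_⟩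
    · exact Int.lt_add_one_iff.1 (Int.ediv_lt_of_lt_mul hM' (by linarith))
    · exact (Int.le_ediv_iff_mul_le hM').2 (by linarith)
    · exact Int.lt_add_one_iff.1 (Int.ediv_lt_of_lt_mul hM' (by linarith))
  · rintro ⟨a, b⟩ ⟨-, -, -, h⟩ ⟨c, d⟩ ⟨-, -, -, h'⟩ heq
    simp only [Prod.mk.injEq] at heq h h' ⊢
    by_contra hne
    have key : ∀ u v : ℤ, u / (M : ℤ) = v / (M : ℤ) → |u - v| ≤ (M : ℤ) := by
      intro u v huv
      have e1 := Int.mul_ediv_add_emod u M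
      have e2 := Int.mul_ediv_add_emod v M
      have := Int.emod_nonneg u hM'.ne'
      have := Int.emod_nonneg v hM'.ne'
      have := Int.emod_lt_of_pos u hM'
      have := Int.emod_lt_of_pos v hM'
      rw [huv] at e1
      exact abs_le.2 ⟨by linarith, by linarith⟩
    refine hno (hasApprox_of_ne hσ (a := a - c) (b := b - d) ?_ (key a c heq.1) (key b d heq.2) ?_)
    · by_contra! h0
      exact hne ⟨by omega, by omega⟩
    · refine lt_of_lt_of_le ?_ hq
      have e : ((a - c : ℤ) : ℤ_[p]) * x - ((b - d : ℤ) : ℤ_[p]) =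
          ((a : ℤ_[p]) * x - b) + -((c : ℤ_[p]) * x - d) := by
        push_cast
        ring
      rw [e]
      refine lt_of_le_of_lt (PadicInt.nonarchimedean _ _) (max_lt h ?_)
      rwa [norm_neg]

/-- Lemma 1: counting rational approximations to a `p`-adic integer with exponent
`τ` strictly between `max{1, τ(x)−1}` and `τ(x)`. -/
theorem counting_upper_bound_general {p : ℕ} [Fact p.Prime] (x : ℤ_[p]) (τ : ℝ)
    (hτ₁ : max 1 (dioExp1 x - 1) < τ) (hτ₂ : τ < dioExp1 x) :
    ∀ ε > (0 : ℝ), ∃ N₀ : ℕ, ∀ N : ℕ, N₀ ≤ N →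
      ({q : ℤ × ℤ | 0 < q.1 ∧ q.1 ≤ (N : ℤ) ∧ |q.2| ≤ (N : ℤ) ∧
        ‖(q.1 : ℤ_[p]) * x - (q.2 : ℤ_[p])‖ < (N : ℝ) ^ (-τ)}.ncard : ℝ)
        ≤ (N : ℝ) ^ (dioExp1 x - τ + ε) := by
  have hτ1 : 1 < τ := lt_of_le_of_lt (le_max_left _ _) hτ₁
  have hdef : dioExp1 x = sSup {σ : ℝ | ∀ Q₀ : ℕ, ∃ Q : ℕ, Q₀ ≤ Q ∧ HasApprox x σ Q} := rfl
  set t := dioExp1 x with ht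
  set T : Set ℝ := {σ : ℝ | ∀ Q₀ : ℕ, ∃ Q : ℕ, Q₀ ≤ Q ∧ HasApprox x σ Q} with hT
  -- An unbounded set would have supremum `0` by convention.
  have hbdd : BddAbove T := by
    by_contra h
    rw [Real.sSup_of_not_bddAbove h] at hdef
    linarith
  have ht2 : 2 ≤ t := by
    by_contra! hlt
    have hmem : (t + 2) / 2 ∈ T := by
      intro Q₀
      have hlim := (tendsto_rpow_atTop (y := 2 - (t + 2) / 2) (by linarith)).comp
        (tendsto_natCast_atTop_atTop (R := ℝ))
      obtain ⟨Q, h1, h2, h3⟩ := ((hlim.eventually_ge_atTop (p : ℝ)).and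
        ((Filter.eventually_ge_atTop 1).and (Filter.eventually_ge_atTop Q₀))).exists
      exact ⟨Q, h3, hasApprox_of_large x (by linarith) h2 h1⟩
    have := le_csSup hbdd hmem
    linarith
  intro ε hε
  set s := t + ε / 2 with hs
  have hs0 : 0 < s := by linarith
  have hsT : s ∉ T := fun h => by
    have := le_csSup hbdd h
    linarith
  obtain ⟨Q₀, hQ₀⟩ : ∃ Q₀ : ℕ, ∀ Q : ℕ, Q₀ ≤ Q → ¬ HasApprox x s Q := by
    simpa [hT] using hsT
  set α := τ / s with hα
  have hα0 : 0 < α := div_pos (by linarith) hs0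
  have hα1 : α ≤ 1 := (div_le_one hs0).2 (by linarith)
  have hlim1 := (tendsto_rpow_atTop hα0).comp (tendsto_natCast_atTop_atTop (R := ℝ))
  have hlim2 := (tendsto_rpow_atTop (half_pos hε)).comp (tendsto_natCast_atTop_atTop (R := ℝ))
  refine Filter.eventually_atTop.1 ?_
  filter_upwards [hlim1.eventually_ge_atTop (Q₀ : ℝ), hlim2.eventually_ge_atTop 32,
    Filter.eventually_ge_atTop 1] with N hN1 hN2 hN3
  simp only [Function.comp_apply] at hN1 hN2
  have hN : (1 : ℝ) ≤ N := by exact_mod_cast hN3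
  have hN0 : (0 : ℝ) < N := by linarith
  set M := ⌊(N : ℝ) ^ α⌋₊ with hM
  have hM1 : 1 ≤ M := Nat.le_floor (by simpa using Real.one_le_rpow hN hα0.le)
  have hM1' : (1 : ℝ) ≤ M := by exact_mod_cast hM1
  have hMle : (M : ℝ) ≤ (N : ℝ) ^ α := Nat.floor_le (by positivity)
  have hMlt : (N : ℝ) ^ α < M + 1 := Nat.lt_floor_add_one _
  have hMN : M ≤ N := by
    have : (N : ℝ) ^ α ≤ (N : ℝ) ^ (1 : ℝ) := Real.rpow_le_rpow_of_exponent_le hN hα1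
    rw [Real.rpow_one] at this
    exact_mod_cast hMle.trans this
  have hq : (N : ℝ) ^ (-τ) ≤ (M : ℝ) ^ (-s) := by
    have e : (N : ℝ) ^ (-τ) = ((N : ℝ) ^ α) ^ (-s) := by
      rw [← Real.rpow_mul hN0.le]
      congr 1
      rw [hα]
      field_simp
    rw [e]
    exact Real.rpow_le_rpow_of_nonpos (by linarith) hMle (by linarith)
  have hcount := ncard_le_of_not_hasApprox (x := x) (τ := τ) (by linarith) hM1 hMN hq
    (hQ₀ M (Nat.le_floor hN1))
  have hK : ((N / M : ℕ) : ℝ) ≤ 2 * (N : ℝ) ^ (1 - α) := by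
    refine Nat.cast_div_le.trans ?_
    rw [div_le_iff₀ (by linarith)]
    have e : (N : ℝ) ^ (1 - α) * (N : ℝ) ^ α = N := by
      rw [← Real.rpow_add hN0, sub_add_cancel, Real.rpow_one]
    have hpos : 0 < (N : ℝ) ^ (1 - α) := by positivity
    nlinarith
  -- This is where `2 ≤ t` enters: `2 (s - τ) / s ≤ s - τ`.
  have hexp : (1 - α) * 2 ≤ s - τ := by
    have e : (1 - α) * 2 = 2 * (s - τ) / s := by
      rw [hα]
      field_simp
    rw [e, div_le_iff₀ hs0]
    nlinarith
  calc _ ≤ ((8 * (N / M) ^ 2 : ℕ) : ℝ) := by exact_mod_cast hcount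
    _ = 8 * ((N / M : ℕ) : ℝ) ^ 2 := by push_cast; ring
    _ ≤ 8 * (2 * (N : ℝ) ^ (1 - α)) ^ 2 := by gcongr
    _ = 32 * (N : ℝ) ^ ((1 - α) * 2) := by
          rw [Real.rpow_mul hN0.le, Real.rpow_two]
          ring
    _ ≤ (N : ℝ) ^ (ε / 2) * (N : ℝ) ^ (s - τ) := by
          gcongr
    _ = (N : ℝ) ^ (t - τ + ε) := by
          rw [← Real.rpow_add hN0, hs]
          congr 1
          ring
end

section
/- Let p be a prime, n ≥ 1, and x ∈ ℤ_p^n with Diophantine exponent τ(x) = n+1. Let τ = (τ₁,…,τₙ) satisfy Σ_{i=1}^n τ_i < n+1 and τ_i > 1 for each i. Then there exist positive constants c₁, c₂ and N₀ ∈ ℕ such that for all N ≥ N₀, c₁ N^{n+1 − Σ_{i=1}^n τ_i} ≤ #𝒬(x, τ, N) ≤ c₂ N^{n+1 − Σ_{i=1}^n τ_i}. -/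
/-!
The points counted lie in the lattice `Λ = {(q₀, q) : q₀ xᵢ ≡ qᵢ mod p ^ kᵢ}`, where `p ^ kᵢ` is the
least power of `p` exceeding `N ^ τᵢ`. It is the kernel of a surjection `φ` of `ℤ × ℤⁿ` onto a group
of order `D`, with `N ^ S ≤ D ≤ p ^ n * N ^ S` and `S = ∑ τᵢ`.

Fix `β` slightly below `S / (n + 1)`. Because the Diophantine exponent of `x` is `n + 1`, the lattice
has no nonzero point of sup norm at most `N ^ β` (`eventually_no_small`); the condition `τᵢ > 1` rules
out points with `q₀ = 0`. Hence a box `B` of radius `r = ⌊N ^ β / 2⌋` embeds in the finite group.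
A packing argument on the sumsets of `φ(B)` (`image_intBox_growth`) shows that about `3 D / |B|`
copies of `φ(B)` add up to the whole group, so each coset of `Λ` has a representative of norm
at most `M`, of order `D / r ^ n + r`, and this is `o(N)` by the choice of `β`.
With such small coset representatives, `Λ` is compared with all integer points of boxes of size
`N + M` (`card_ker_mul_le`) and `N - M` (`le_card_ker_mul`), which gives the two bounds.
-/

open scoped BigOperators

/-- The Diophantine exponent of `x ∈ ℤ_p^n`. -/
noncomputable def dioExp {p : ℕ} [Fact p.Prime] {n : ℕ} (x : Fin n → ℤ_[p]) : ℝ :=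
  sSup {s : ℝ | ∃ τ : Fin n → ℝ, s = ∑ i, τ i ∧
    ∀ Q₀ : ℕ, ∃ Q : ℕ, Q₀ ≤ Q ∧ ∃ q₀ : ℤ, ∃ q : Fin n → ℤ,
      0 < q₀ ∧ q₀ ≤ (Q : ℤ) ∧ (∀ i, |q i| ≤ (Q : ℤ)) ∧
      ∀ i, ‖(q₀ : ℤ_[p]) * x i - (q i : ℤ_[p])‖ < (Q : ℝ) ^ (-(τ i))}

/-- The set `𝒬(x, τ, N)` of integer vectors `(q₀, q₁, …, qₙ)` with `0 < q₀ ≤ N`,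
`max |q_i| ≤ N` and `|q₀ x_i − q_i|_p < N^{−τ_i}` for all `i`. -/
def QsetT {p : ℕ} [Fact p.Prime] {n : ℕ} (x : Fin n → ℤ_[p]) (τ : Fin n → ℝ)
    (N : ℕ) : Set (ℤ × (Fin n → ℤ)) :=
  {q | 0 < q.1 ∧ q.1 ≤ (N : ℤ) ∧ (∀ i, |q.2 i| ≤ (N : ℤ)) ∧
    ∀ i, ‖(q.1 : ℤ_[p]) * x i - (q.2 i : ℤ_[p])‖ < (N : ℝ) ^ (-(τ i))}

/-! ### Integer boxes -/

/-- The integer points of `ℤ × ℤⁿ` of sup norm at most `M`. -/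
noncomputable def intBox (n M : ℕ) : Finset (ℤ × (Fin n → ℤ)) :=
  Finset.Icc (-(M : ℤ)) M ×ˢ Fintype.piFinset fun _ => Finset.Icc (-(M : ℤ)) M

lemma mem_intBox {n M : ℕ} {v : ℤ × (Fin n → ℤ)} :
    v ∈ intBox n M ↔ |v.1| ≤ (M : ℤ) ∧ ∀ i, |v.2 i| ≤ (M : ℤ) := by
  simp [intBox, abs_le]

lemma card_intBox (n M : ℕ) : (intBox n M).card = (2 * M + 1) ^ (n + 1) := by
  have : ((M : ℤ) + 1 - -(M : ℤ)).toNat = 2 * M + 1 := by omega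
  simp only [intBox, Finset.card_product, Fintype.card_piFinset, Int.card_Icc, this]
  simp [pow_succ, mul_comm]

lemma add_mem_intBox {n M K : ℕ} {v w : ℤ × (Fin n → ℤ)} (hv : v ∈ intBox n M)
    (hw : w ∈ intBox n K) : v + w ∈ intBox n (M + K) := by
  rw [mem_intBox] at *
  push_cast
  exact ⟨(abs_add_le _ _).trans (add_le_add hv.1 hw.1),
    fun i => (abs_add_le _ _).trans (add_le_add (hv.2 i) (hw.2 i))⟩

lemma neg_mem_intBox {n M : ℕ} {v : ℤ × (Fin n → ℤ)} (hv : v ∈ intBox n M) :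
    -v ∈ intBox n M := by
  rw [mem_intBox] at *
  simpa using hv

lemma intBox_mono {n M K : ℕ} (h : M ≤ K) : intBox n M ⊆ intBox n K := by
  intro v hv
  rw [mem_intBox] at *
  have : (M : ℤ) ≤ K := by exact_mod_cast h
  exact ⟨hv.1.trans this, fun i => (hv.2 i).trans this⟩

lemma exists_mem_intBox {n : ℕ} (v : ℤ × (Fin n → ℤ)) : ∃ M, v ∈ intBox n M := by
  refine ⟨v.1.natAbs + ∑ i, (v.2 i).natAbs, mem_intBox.2 ⟨?_, fun i => ?_⟩⟩
  · rw [Int.abs_eq_natAbs]; omega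
  rw [Int.abs_eq_natAbs]
  have := Finset.single_le_sum (f := fun i => (v.2 i).natAbs) (fun _ _ => Nat.zero_le _)
    (Finset.mem_univ i)
  norm_cast
  omega

/-- Truncating each coordinate to `[-M, M]` splits a point of the larger box. -/
lemma exists_add_of_mem_intBox {n M K : ℕ} {v : ℤ × (Fin n → ℤ)} (hv : v ∈ intBox n (M + K)) :
    ∃ a ∈ intBox n M, ∃ b ∈ intBox n K, v = a + b := by
  rw [mem_intBox] at hv
  push_cast at hv
  let c : ℤ → ℤ := fun t => max (-(M : ℤ)) (min t M)
  have h1 : ∀ t, |c t| ≤ (M : ℤ) := fun t => by simp only [c, abs_le]; omega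
  have h2 : ∀ t, |t| ≤ (M : ℤ) + K → |t - c t| ≤ (K : ℤ) := fun t ht => by
    simp only [c, abs_le] at *; omega
  refine ⟨(c v.1, fun i => c (v.2 i)), mem_intBox.2 ⟨h1 _, fun i => h1 _⟩,
    (v.1 - c v.1, fun i => v.2 i - c (v.2 i)),
    mem_intBox.2 ⟨h2 _ hv.1, fun i => h2 _ (hv.2 i)⟩, ?_⟩
  ext <;> simp

/-! ### Covering a finite group by images of boxes, and counting kernel points -/

section Covering

variable {n : ℕ} {G : Type*} [AddCommGroup G] [Fintype G] [DecidableEq G]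

/-- The images of the dilates of a box grow by at least one full disjoint translate of the image
of the box every three steps, until they fill the group. -/
lemma image_intBox_growth (φ : ℤ × (Fin n → ℤ) →+ G) (hφ : Function.Surjective φ) {r : ℕ}
    (hr : 1 ≤ r) (j : ℕ) :
    (intBox n (3 * j * r)).image φ = Finset.univ ∨
      j * ((intBox n r).image φ).card ≤ ((intBox n (3 * j * r)).image φ).card := by
  induction j with
  | zero => right; simp
  | succ j ih =>
    by_cases hfull : (intBox n (3 * (j + 1) * r)).image φ = Finset.univ
    · exact Or.inl hfull
    right
    have hsub : (intBox n (3 * j * r)).image φ ⊆ (intBox n (3 * (j + 1) * r)).image φ :=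
      Finset.image_subset_image (intBox_mono (by gcongr; omega))
    have ih' := ih.resolve_left fun h =>
      hfull (Finset.eq_univ_of_forall fun g => hsub (h ▸ Finset.mem_univ g))
    -- A new point appears at step `3 * j + 2`: otherwise the images would be stationary, although
    -- they exhaust the group.
    obtain ⟨g, hg, hg'⟩ : ∃ g ∈ (intBox n ((3 * j + 2) * r)).image φ,
        g ∉ (intBox n ((3 * j + 1) * r)).image φ := by
      by_contra! hcon
      apply hfull
      have hst : ∀ m, (intBox n ((3 * j + 1 + m) * r)).image φ ⊆
          (intBox n ((3 * j + 1) * r)).image φ := by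
        intro m
        induction m with
        | zero => simp
        | succ m ihm =>
          intro g hg
          obtain ⟨v, hv, rfl⟩ := Finset.mem_image.1 hg
          have : (3 * j + 1 + (m + 1)) * r = (3 * j + 1 + m) * r + r := by ring
          rw [this] at hv
          obtain ⟨a, ha, b, hb, rfl⟩ := exists_add_of_mem_intBox hv
          obtain ⟨a', ha', hφa⟩ := Finset.mem_image.1 (ihm (Finset.mem_image_of_mem φ ha))
          apply hcon
          refine Finset.mem_image.2 ⟨a' + b, ?_, by rw [map_add, map_add, hφa]⟩
          have : (3 * j + 2) * r = (3 * j + 1) * r + r := by ring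
          rw [this]
          exact add_mem_intBox ha' hb
      refine Finset.eq_univ_of_forall fun g => ?_
      obtain ⟨v, rfl⟩ := hφ g
      obtain ⟨M, hM⟩ := exists_mem_intBox v
      have h1 : v ∈ intBox n ((3 * j + 1 + M) * r) := intBox_mono (by nlinarith) hM
      exact Finset.image_subset_image (intBox_mono (by gcongr; omega))
        (hst M (Finset.mem_image_of_mem φ h1))
    obtain ⟨w, hw, rfl⟩ := Finset.mem_image.1 hg
    have hdisj : Disjoint ((intBox n (3 * j * r)).image φ)
        (((intBox n r).image φ).image (φ w + ·)) := by
      rw [Finset.disjoint_left]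
      rintro _ h1 h2
      obtain ⟨a, ha, rfl⟩ := Finset.mem_image.1 h1
      obtain ⟨_, h3, h4⟩ := Finset.mem_image.1 h2
      obtain ⟨b, hb, rfl⟩ := Finset.mem_image.1 h3
      apply hg'
      refine Finset.mem_image.2 ⟨a + -b, ?_, ?_⟩
      · have : (3 * j + 1) * r = 3 * j * r + r := by ring
        rw [this]
        exact add_mem_intBox ha (neg_mem_intBox hb)
      · rw [map_add, map_neg, ← h4]; abel
    have hunion : (intBox n (3 * j * r)).image φ ∪ ((intBox n r).image φ).image (φ w + ·) ⊆
        (intBox n (3 * (j + 1) * r)).image φ := by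
      refine Finset.union_subset hsub ?_
      intro y hy
      obtain ⟨_, h3, rfl⟩ := Finset.mem_image.1 hy
      obtain ⟨b, hb, rfl⟩ := Finset.mem_image.1 h3
      refine Finset.mem_image.2 ⟨w + b, ?_, map_add _ _ _⟩
      have : 3 * (j + 1) * r = (3 * j + 2) * r + r := by ring
      rw [this]
      exact add_mem_intBox hw hb
    have hcard := Finset.card_le_card hunion
    rw [Finset.card_union_of_disjoint hdisj,
      Finset.card_image_of_injective _ (add_right_injective (φ w))] at hcard
    calc (j + 1) * ((intBox n r).image φ).card
        = j * ((intBox n r).image φ).card + ((intBox n r).image φ).card := by ring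
      _ ≤ _ := (Nat.add_le_add_right ih' _).trans hcard

/-- If the kernel of `φ` meets the box of size `2 * r` only in `0`, then every coset of the kernel
meets a box whose size is about `card G / r ^ n`. This replaces the bound on the last successive
minimum given by Minkowski's second theorem. -/
lemma exists_rep_intBox (φ : ℤ × (Fin n → ℤ) →+ G) (hφ : Function.Surjective φ) {r : ℕ}
    (hr : 1 ≤ r) (hker : ∀ v ∈ intBox n (2 * r), φ v = 0 → v = 0) (g : G) :
    ∃ v ∈ intBox n (3 * (Fintype.card G / (2 * r + 1) ^ (n + 1) + 1) * r), φ v = g := by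
  set j := Fintype.card G / (2 * r + 1) ^ (n + 1) + 1 with hj
  have hinj : Set.InjOn φ (intBox n r) := by
    intro a ha b hb hab
    have : a + -b ∈ intBox n (2 * r) := by
      rw [two_mul]; exact add_mem_intBox ha (neg_mem_intBox hb)
    have := hker _ this (by rw [map_add, map_neg, hab, add_neg_cancel])
    rwa [← sub_eq_add_neg, sub_eq_zero] at this
  have hfull : (intBox n (3 * j * r)).image φ = Finset.univ := by
    refine (image_intBox_growth φ hφ hr j).resolve_right fun h => ?_
    rw [Finset.card_image_of_injOn hinj, card_intBox] at h
    have h1 := h.trans (Finset.card_le_univ _)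
    have h2 := Nat.lt_mul_div_succ (Fintype.card G) (b := (2 * r + 1) ^ (n + 1)) (by positivity)
    rw [mul_comm] at h1
    exact absurd (h2.trans_le h1) (lt_irrefl _)
  exact Finset.mem_image.1 (hfull ▸ Finset.mem_univ g)

/-- Adding coset representatives to the kernel points of a box is injective into a larger box. -/
lemma card_ker_mul_le (φ : ℤ × (Fin n → ℤ) →+ G) {M : ℕ}
    (hM : ∀ g, ∃ v ∈ intBox n M, φ v = g) (N : ℕ) :
    ((intBox n N).filter fun v => φ v = 0).card * Fintype.card G ≤
      (2 * (N + M) + 1) ^ (n + 1) := by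
  choose m hm hφm using hM
  rw [← card_intBox, ← Finset.card_univ, ← Finset.card_product]
  refine Finset.card_le_card_of_injOn (fun a => a.1 + m a.2) ?_ ?_
  · rintro ⟨v, g⟩ h
    simp only [Finset.coe_product, Set.mem_prod, Finset.mem_coe, Finset.mem_filter] at h
    exact add_mem_intBox h.1.1 (hm g)
  · rintro ⟨v, g⟩ h ⟨w, g'⟩ h' heq
    simp only [Finset.coe_product, Set.mem_prod, Finset.mem_coe, Finset.mem_filter] at h h' heq
    have := congrArg φ heq
    rw [map_add, map_add, h.1.2, h'.1.2, hφm, hφm, zero_add, zero_add] at this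
    subst this
    rw [add_left_inj] at heq
    rw [heq]

/-- Subtracting coset representatives from the points of a smaller box produces kernel points;
the first coordinate stays positive if it exceeds the size of the representatives. -/
lemma le_card_ker_mul (φ : ℤ × (Fin n → ℤ) →+ G) {M : ℕ}
    (hM : ∀ g, ∃ v ∈ intBox n M, φ v = g) {N : ℕ} (hMN : 2 * M ≤ N) :
    (N - 2 * M) * (2 * (N - M) + 1) ^ n ≤
      ((intBox n N).filter fun v => φ v = 0 ∧ 0 < v.1).card * Fintype.card G := by
  choose m hm hφm using hM
  let T : Finset (ℤ × (Fin n → ℤ)) := Finset.Icc ((M : ℤ) + 1) (N - M) ×ˢ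
    Fintype.piFinset fun _ => Finset.Icc (-((N : ℤ) - M)) (N - M)
  have hT : T.card = (N - 2 * M) * (2 * (N - M) + 1) ^ n := by
    have h1 : ((N : ℤ) - M + 1 - (M + 1)).toNat = N - 2 * M := by omega
    have h2 : ((N : ℤ) - M + 1 - -((N : ℤ) - M)).toNat = 2 * (N - M) + 1 := by omega
    simp only [T, Finset.card_product, Fintype.card_piFinset, Int.card_Icc, h1, h2]
    simp
  rw [← hT, ← Finset.card_univ, ← Finset.card_product]
  refine Finset.card_le_card_of_injOn (fun w => (w - m (φ w), φ w)) ?_ ?_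
  · intro w hw
    have hmw := mem_intBox.1 (hm (φ w))
    simp only [T, Finset.coe_product, Set.mem_prod, Finset.mem_coe, Finset.mem_Icc,
      Fintype.mem_piFinset] at hw
    simp only [Finset.coe_product, Set.mem_prod, Finset.mem_coe, Finset.mem_filter,
      Finset.mem_univ, and_true, mem_intBox, Prod.fst_sub, Prod.snd_sub, Pi.sub_apply, map_sub,
      hφm, sub_self, true_and]
    have h0 := hmw.1
    rw [abs_le] at h0
    refine ⟨⟨by rw [abs_le]; omega, fun i => ?_⟩, by omega⟩
    have h1 := hmw.2 i
    have h2 := hw.2 i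
    rw [abs_le] at *
    omega
  · intro w _ w' _ heq
    simp only [Prod.mk.injEq] at heq
    obtain ⟨h1, h2⟩ := heq
    rw [h2] at h1
    exact sub_left_injective h1

end Covering

/-! ### The lattice of simultaneous `p`-adic approximations -/

/-- The least power `p ^ k` exceeding a real number `y ≥ 1` turns the bound `‖z‖ < y⁻¹` into the
congruence `z ≡ 0 mod p ^ k`. -/
lemma exists_least_pow {p : ℕ} [hp : Fact p.Prime] {y : ℝ} (hy : 1 ≤ y) :
    ∃ k : ℕ, y < (p : ℝ) ^ k ∧ (p : ℝ) ^ k ≤ p * y ∧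
      ∀ z : ℤ_[p], ‖z‖ < y⁻¹ ↔ PadicInt.toZModPow k z = 0 := by
  have hp1 : (1 : ℝ) < p := by exact_mod_cast hp.out.one_lt
  have hp0 : (0 : ℝ) < p := by positivity
  have hex : ∃ k : ℕ, y < (p : ℝ) ^ k := pow_unbounded_of_one_lt y hp1
  classical
  refine ⟨Nat.find hex, Nat.find_spec hex, ?_, fun z => ?_⟩
  · have hk : Nat.find hex ≠ 0 := fun h => by
      have := Nat.find_spec hex
      rw [h, pow_zero] at this
      linarith
    obtain ⟨m, hm⟩ := Nat.exists_eq_succ_of_ne_zero hk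
    have := Nat.find_min hex (m := m) (by omega)
    rw [hm, pow_succ, mul_comm]
    gcongr
    exact not_lt.1 this
  · rw [← RingHom.mem_ker, PadicInt.ker_toZModPow, ← PadicInt.norm_le_pow_iff_mem_span_pow]
    constructor
    · intro h
      by_cases hz : z = 0
      · subst hz; simp
      rw [PadicInt.norm_eq_zpow_neg_valuation hz, zpow_neg, zpow_natCast] at h
      have h1 : y < (p : ℝ) ^ z.valuation := (inv_lt_inv₀ (by positivity) (by positivity)).1 h
      rw [PadicInt.norm_eq_zpow_neg_valuation hz]
      have h2 : Nat.find hex ≤ z.valuation := Nat.find_min' hex h1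
      exact zpow_le_zpow_right₀ hp1.le (by omega)
    · intro h
      refine h.trans_lt ?_
      rw [zpow_neg, zpow_natCast]
      exact inv_strictAnti₀ (by positivity) (Nat.find_spec hex)

/-- The homomorphism `(q₀, q) ↦ (q₀ xᵢ - qᵢ mod p ^ kᵢ)ᵢ`, whose kernel is the lattice of
approximations to `x` of prescribed precision. -/
noncomputable def approxHom {p : ℕ} [Fact p.Prime] {n : ℕ} (x : Fin n → ℤ_[p]) (k : Fin n → ℕ) :
    ℤ × (Fin n → ℤ) →+ ((i : Fin n) → ZMod (p ^ k i)) where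
  toFun q i := PadicInt.toZModPow (k i) ((q.1 : ℤ_[p]) * x i - (q.2 i : ℤ_[p]))
  map_zero' := by ext i; simp
  map_add' a b := by
    ext i
    simp only [Pi.add_apply, ← map_add]
    congr 1
    simp only [Prod.fst_add, Prod.snd_add, Pi.add_apply]
    push_cast
    ring

lemma approxHom_surjective {p : ℕ} [Fact p.Prime] {n : ℕ} (x : Fin n → ℤ_[p]) (k : Fin n → ℕ) :
    Function.Surjective (approxHom x k) := by
  intro g
  refine ⟨(0, fun i => -((g i).cast : ℤ)), ?_⟩
  ext i
  simp [approxHom]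

/-- Below the scale `N ^ β` with `β < (∑ τᵢ) / (n + 1)`, there are no nonzero points of the
lattice of `N ^ (-τᵢ)`-approximations, for `N` large. -/
lemma eventually_no_small {p : ℕ} [Fact p.Prime] {n : ℕ} (x : Fin n → ℤ_[p])
    (hx : dioExp x = (n : ℝ) + 1) (τ : Fin n → ℝ) (hτ : ∀ i, 1 < τ i) {β : ℝ} (hβ0 : 0 < β)
    (hβ1 : β < 1) (hβ : β * ((n : ℝ) + 1) < ∑ i, τ i) :
    ∀ᶠ N : ℕ in Filter.atTop, ∀ (r : ℕ), (r : ℝ) ≤ (N : ℝ) ^ β → ∀ v ∈ intBox n r,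
      (∀ i, ‖(v.1 : ℤ_[p]) * x i - (v.2 i : ℤ_[p])‖ < ((N : ℝ) ^ τ i)⁻¹) → v = 0 := by
  -- The supremum cannot have its junk value `0`, so the defining set is bounded above.
  have hbdd : BddAbove {s : ℝ | ∃ τ : Fin n → ℝ, s = ∑ i, τ i ∧
      ∀ Q₀ : ℕ, ∃ Q : ℕ, Q₀ ≤ Q ∧ ∃ q₀ : ℤ, ∃ q : Fin n → ℤ,
      0 < q₀ ∧ q₀ ≤ (Q : ℤ) ∧ (∀ i, |q i| ≤ (Q : ℤ)) ∧
      ∀ i, ‖(q₀ : ℤ_[p]) * x i - (q i : ℤ_[p])‖ < (Q : ℝ) ^ (-(τ i))} := by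
    by_contra h
    have := Real.sSup_of_not_bddAbove h
    rw [dioExp, this] at hx
    have : (0 : ℝ) ≤ n := Nat.cast_nonneg n
    linarith
  have hnot : ¬ ∀ Q₀ : ℕ, ∃ Q : ℕ, Q₀ ≤ Q ∧ ∃ q₀ : ℤ, ∃ q : Fin n → ℤ,
      0 < q₀ ∧ q₀ ≤ (Q : ℤ) ∧ (∀ i, |q i| ≤ (Q : ℤ)) ∧
      ∀ i, ‖(q₀ : ℤ_[p]) * x i - (q i : ℤ_[p])‖ < (Q : ℝ) ^ (-(τ i / β)) := by
    intro h
    have h1 := le_csSup hbdd ⟨fun i => τ i / β, rfl, h⟩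
    change _ ≤ dioExp x at h1
    rw [hx, ← Finset.sum_div, div_le_iff₀ hβ0] at h1
    linarith
  push Not at hnot
  obtain ⟨Q₀, hQ₀⟩ := hnot
  have htend : Filter.Tendsto (fun N : ℕ => (N : ℝ) ^ β) Filter.atTop Filter.atTop :=
    (tendsto_rpow_atTop hβ0).comp tendsto_natCast_atTop_atTop
  filter_upwards [htend.eventually_ge_atTop (max Q₀ 1), Filter.eventually_ge_atTop 1]
    with N hN hN1 r hr v hv hvn
  have hN1' : (1 : ℝ) ≤ N := by exact_mod_cast hN1
  have hN0 : (0 : ℝ) < N := by linarith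
  have hpos : ∀ w ∈ intBox n r,
      (∀ i, ‖(w.1 : ℤ_[p]) * x i - (w.2 i : ℤ_[p])‖ < ((N : ℝ) ^ τ i)⁻¹) → ¬ 0 < w.1 := by
    intro w hw hwn hw0
    rw [mem_intBox] at hw
    set Q := ⌊(N : ℝ) ^ β⌋₊ with hQ
    have hQ1 : 1 ≤ Q := Nat.le_floor (by simpa using (le_max_right _ _).trans hN)
    have hQN : (Q : ℝ) ≤ (N : ℝ) ^ β := Nat.floor_le (by positivity)
    have hrQ : (r : ℤ) ≤ Q := by exact_mod_cast Nat.le_floor hr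
    obtain ⟨i, hi⟩ := hQ₀ Q (Nat.le_floor ((le_max_left _ _).trans hN)) w.1 w.2 hw0
      ((le_abs_self _).trans (hw.1.trans hrQ)) (fun i => (hw.2 i).trans hrQ)
    refine absurd (hwn i) (not_lt.2 (le_trans ?_ hi))
    rw [Real.rpow_neg (by positivity)]
    have hQ0 : (0 : ℝ) < Q := by exact_mod_cast hQ1
    have hτ0 : 0 ≤ τ i / β := by have := hτ i; positivity
    apply inv_anti₀ (by positivity)
    calc (Q : ℝ) ^ (τ i / β) ≤ ((N : ℝ) ^ β) ^ (τ i / β) := by gcongr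
      _ = (N : ℝ) ^ τ i := by
        rw [← Real.rpow_mul hN0.le, mul_div_cancel₀ _ hβ0.ne']
  have h1 : ¬ 0 < v.1 := hpos v hv hvn
  have h2 : ¬ 0 < (-v).1 := hpos (-v) (neg_mem_intBox hv) fun i => by
    have e : (((-v).1 : ℤ) : ℤ_[p]) * x i - (((-v).2 i : ℤ) : ℤ_[p]) =
        -((v.1 : ℤ_[p]) * x i - (v.2 i : ℤ_[p])) := by
      simp only [Prod.fst_neg, Prod.snd_neg, Pi.neg_apply]
      push_cast
      ring
    rw [e, norm_neg]
    exact hvn i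
  have h0 : v.1 = 0 := by simp at h1 h2; omega
  -- With zero first coordinate, the other coordinates are divisible by powers of `p` exceeding
  -- `N ^ τᵢ > N`, hence vanish.
  rw [mem_intBox] at hv
  refine Prod.ext h0 (funext fun i => ?_)
  have hτi := hτ i
  obtain ⟨k, hk, -, hk'⟩ := exists_least_pow (p := p) (y := (N : ℝ) ^ τ i)
    (Real.one_le_rpow hN1' (by linarith))
  have h3 := (hk' _).1 (hvn i)
  rw [h0] at h3
  simp only [Int.cast_zero, zero_mul, zero_sub, map_neg, neg_eq_zero, map_intCast] at h3
  rw [ZMod.intCast_zmod_eq_zero_iff_dvd] at h3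
  refine Int.eq_zero_of_abs_lt_dvd h3 ?_
  refine (hv.2 i).trans_lt ?_
  have : (r : ℝ) < (p : ℝ) ^ k := by
    refine lt_of_le_of_lt (hr.trans ?_) hk
    exact Real.rpow_le_rpow_of_exponent_le hN1' (by linarith)
  exact_mod_cast this

/-! ### Asymptotic estimates -/

lemma rep_size_le {n : ℕ} {u D' : ℝ} {D : ℕ} (hu : 2 ≤ u) (hD : (D : ℝ) ≤ D') :
    ((3 * (D / (2 * ⌊u / 2⌋₊ + 1) ^ (n + 1) + 1) * ⌊u / 2⌋₊ : ℕ) : ℝ) ≤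
      3 * 2 ^ n * (D' / u ^ n) + 2 * u := by
  set r := ⌊u / 2⌋₊
  have hr1 : (r : ℝ) ≤ u / 2 := Nat.floor_le (by linarith)
  have hr2 : u / 2 < r + 1 := Nat.lt_floor_add_one _
  have hr0 : (0 : ℝ) ≤ r := Nat.cast_nonneg r
  have h1 : ((D / (2 * r + 1) ^ (n + 1) : ℕ) : ℝ) ≤ D' / (2 * (r : ℝ) + 1) ^ (n + 1) := by
    refine Nat.cast_div_le.trans ?_
    push_cast
    gcongr
  have hD0 : 0 ≤ D' := (Nat.cast_nonneg D).trans hD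
  have h2 : D' / (2 * (r : ℝ) + 1) ^ (n + 1) * r ≤ 2 ^ n * (D' / u ^ n) := by
    calc D' / (2 * (r : ℝ) + 1) ^ (n + 1) * r
        ≤ D' / (2 * (r : ℝ) + 1) ^ (n + 1) * (2 * r + 1) := by gcongr; linarith
      _ = D' / (2 * (r : ℝ) + 1) ^ n := by rw [pow_succ]; field_simp
      _ ≤ D' / (u / 2) ^ n := by gcongr; linarith
      _ = 2 ^ n * (D' / u ^ n) := by rw [div_pow]; field_simp
  have h3 := mul_le_mul_of_nonneg_right h1 hr0
  push_cast at h3 ⊢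
  nlinarith

/-- The size of the coset representatives is negligible compared with `N`. -/
lemma eventually_rep_le {n : ℕ} {S β C : ℝ} (hβ1 : β < 1) (hβ : S - n * β < 1) :
    ∀ᶠ N : ℕ in Filter.atTop,
      3 * 2 ^ n * (C * (N : ℝ) ^ S / ((N : ℝ) ^ β) ^ n) + 2 * (N : ℝ) ^ β ≤ N / 4 := by
  have key : ∀ a : ℝ, a < 1 → ∀ c : ℝ, ∀ᶠ N : ℕ in Filter.atTop, c * (N : ℝ) ^ a ≤ N / 8 := by
    intro a ha c
    have h : Filter.Tendsto (fun N : ℕ => (N : ℝ) ^ (1 - a)) Filter.atTop Filter.atTop :=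
      (tendsto_rpow_atTop (by linarith)).comp tendsto_natCast_atTop_atTop
    filter_upwards [h.eventually_ge_atTop (8 * c), Filter.eventually_ge_atTop 1] with N h1 h2
    have hN : (0 : ℝ) < N := by exact_mod_cast h2
    have h3 := mul_le_mul_of_nonneg_right h1 (Real.rpow_nonneg hN.le a)
    rw [← Real.rpow_add hN, sub_add_cancel, Real.rpow_one] at h3
    linarith
  filter_upwards [key _ hβ (3 * 2 ^ n * C), key _ hβ1 2, Filter.eventually_ge_atTop 1]
    with N h1 h2 h3
  have hN : (0 : ℝ) < N := by exact_mod_cast h3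
  rw [Real.rpow_sub hN, mul_comm (n : ℝ) β, Real.rpow_mul hN.le, Real.rpow_natCast] at h1
  calc _ = 3 * 2 ^ n * C * ((N : ℝ) ^ S / ((N : ℝ) ^ β) ^ n) + 2 * (N : ℝ) ^ β := by ring
    _ ≤ N / 4 := by linarith

/-! ### The counting estimate -/

/-- Two-sided counting estimate: `#𝒬(x, τ, N) ≍ N^{n+1−Στ_i}`. -/
theorem counting_two_sided {p : ℕ} [Fact p.Prime] {n : ℕ} (hn : 1 ≤ n)
    (x : Fin n → ℤ_[p]) (hx : dioExp x = (n : ℝ) + 1) (τ : Fin n → ℝ)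
    (hsum : ∑ i, τ i < (n : ℝ) + 1) (hτ : ∀ i, 1 < τ i) :
    ∃ c₁ c₂ : ℝ, 0 < c₁ ∧ 0 < c₂ ∧ ∃ N₀ : ℕ, ∀ N : ℕ, N₀ ≤ N →
      c₁ * (N : ℝ) ^ ((n : ℝ) + 1 - ∑ i, τ i) ≤ ((QsetT x τ N).ncard : ℝ) ∧
      ((QsetT x τ N).ncard : ℝ) ≤ c₂ * (N : ℝ) ^ ((n : ℝ) + 1 - ∑ i, τ i) := by
  set S := ∑ i, τ i with hS
  have hn' : (1 : ℝ) ≤ n := by exact_mod_cast hn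
  have hp0 : (0 : ℝ) < p := by exact_mod_cast (Fact.out : p.Prime).pos
  -- `β` lies below `S / (n + 1)` and above `(S - 1) / n`.
  obtain ⟨β, hβlo, hβhi⟩ : ∃ β, max 0 ((S - 1) / n) < β ∧ β < S / (n + 1) := by
    apply exists_between
    have hS0 : 0 < S := Finset.sum_pos (fun i _ => by linarith [hτ i]) ⟨⟨0, hn⟩, Finset.mem_univ _⟩
    refine max_lt (by positivity) ?_
    rw [div_lt_div_iff₀ (by linarith) (by linarith)]
    nlinarith
  have hβ0 : 0 < β := (le_max_left _ _).trans_lt hβlo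
  have hβS : S - n * β < 1 := by
    have := (le_max_right _ _).trans_lt hβlo
    rw [div_lt_iff₀ (by linarith)] at this
    linarith
  rw [lt_div_iff₀ (by linarith)] at hβhi
  have hβ1 : β < 1 := by nlinarith
  refine ⟨1 / (2 * p ^ n), 4 ^ (n + 1), by positivity, by positivity, ?_⟩
  rw [← Filter.eventually_atTop]
  have htend : Filter.Tendsto (fun N : ℕ => (N : ℝ) ^ β) Filter.atTop Filter.atTop :=
    (tendsto_rpow_atTop hβ0).comp tendsto_natCast_atTop_atTop
  filter_upwards [eventually_no_small x hx τ hτ hβ0 hβ1 hβhi,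
    eventually_rep_le (n := n) (C := (p : ℝ) ^ n) hβ1 hβS,
    htend.eventually_ge_atTop 2, Filter.eventually_ge_atTop 1] with N hsmall hrep hu hN1
  have hN1' : (1 : ℝ) ≤ N := by exact_mod_cast hN1
  have hN0 : (0 : ℝ) < N := by linarith
  choose k hk1 hk2 hk3 using fun i => exists_least_pow (p := p) (y := (N : ℝ) ^ τ i)
    (Real.one_le_rpow hN1' (by linarith [hτ i]))
  set φ := approxHom x k with hφ
  have hφker : ∀ v, φ v = 0 ↔
      ∀ i, ‖(v.1 : ℤ_[p]) * x i - (v.2 i : ℤ_[p])‖ < ((N : ℝ) ^ τ i)⁻¹ := by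
    intro v
    simp only [hk3]
    exact funext_iff
  set D := Fintype.card ((i : Fin n) → ZMod (p ^ k i)) with hDdef
  have hD : (D : ℝ) = ∏ i, (p : ℝ) ^ k i := by
    simp [hDdef, Fintype.card_pi, ZMod.card]
  have hprod : ∏ i, (N : ℝ) ^ τ i = (N : ℝ) ^ S := (Real.rpow_sum_of_pos hN0 _ _).symm
  have hDlo : (N : ℝ) ^ S ≤ D := by
    rw [hD, ← hprod]
    exact Finset.prod_le_prod (fun i _ => by positivity) fun i _ => (hk1 i).le
  have hDhi : (D : ℝ) ≤ (p : ℝ) ^ n * (N : ℝ) ^ S := by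
    rw [hD, ← hprod]
    refine (Finset.prod_le_prod (fun i _ => by positivity) fun i _ => hk2 i).trans_eq ?_
    rw [Finset.prod_mul_distrib]
    simp
  set r := ⌊(N : ℝ) ^ β / 2⌋₊ with hr
  have hr1 : 1 ≤ r := Nat.le_floor (by push_cast; linarith)
  have hr2 : ((2 * r : ℕ) : ℝ) ≤ (N : ℝ) ^ β := by
    have : (r : ℝ) ≤ (N : ℝ) ^ β / 2 := Nat.floor_le (by positivity)
    push_cast
    linarith
  have hM := exists_rep_intBox φ (approxHom_surjective x k) hr1
    fun v hv h => hsmall (2 * r) hr2 v hv ((hφker v).1 h)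
  have hMle := (rep_size_le (n := n) hu hDhi).trans hrep
  rw [← hr] at hMle
  rw [← hDdef] at hM
  set M := 3 * (D / (2 * r + 1) ^ (n + 1) + 1) * r
  have hMN : 4 * M ≤ N := by
    have : (4 : ℝ) * M ≤ N := by linarith
    exact_mod_cast this
  have hQ : QsetT x τ N = ((intBox n N).filter fun v => φ v = 0 ∧ 0 < v.1 :) := by
    ext v
    simp only [QsetT, Set.mem_ofPred_eq, Finset.coe_filter, mem_intBox, hφker,
      Real.rpow_neg hN0.le]
    constructor
    · rintro ⟨h1, h2, h3, h4⟩
      exact ⟨⟨by rwa [abs_of_pos h1], h3⟩, h4, h1⟩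
    · rintro ⟨⟨h2, h3⟩, h4, h1⟩
      exact ⟨h1, (le_abs_self _).trans h2, h3, h4⟩
  rw [hQ, Set.ncard_coe_finset]
  have hlo := le_card_ker_mul φ hM (N := N) (by omega)
  have hhi := card_ker_mul_le φ hM N
  rw [← hDdef] at hlo hhi
  set q := ((intBox n N).filter fun v => φ v = 0 ∧ 0 < v.1).card
  have hqhi : q * D ≤ (4 * N) ^ (n + 1) := by
    refine (Nat.mul_le_mul_right D (Finset.card_le_card ?_)).trans (hhi.trans ?_)
    · exact Finset.monotone_filter_right _ fun v _ h => h.1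
    · exact Nat.pow_le_pow_left (by omega) _
  have hqlo : N ^ (n + 1) ≤ 2 * (q * D) := by
    calc N ^ (n + 1) = N * N ^ n := by ring
      _ ≤ (2 * (N - 2 * M)) * (2 * (N - M) + 1) ^ n := by gcongr <;> omega
      _ ≤ 2 * (q * D) := by rw [mul_assoc]; gcongr
  have hqhi' : (q : ℝ) * D ≤ (4 * N) ^ (n + 1) := by exact_mod_cast hqhi
  have hqlo' : (N : ℝ) ^ (n + 1) ≤ 2 * (q * D) := by exact_mod_cast hqlo
  have hNS : 0 < (N : ℝ) ^ S := by positivity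
  have hpow : (N : ℝ) ^ ((n : ℝ) + 1 - S) = (N : ℝ) ^ (n + 1) / (N : ℝ) ^ S := by
    rw [Real.rpow_sub hN0]
    norm_cast
  rw [hpow]
  constructor
  · rw [div_mul_div_comm, one_mul, div_le_iff₀ (by positivity)]
    calc (N : ℝ) ^ (n + 1) ≤ 2 * (q * D) := hqlo'
      _ ≤ 2 * (q * ((p : ℝ) ^ n * (N : ℝ) ^ S)) := by gcongr
      _ = q * (2 * (p : ℝ) ^ n * (N : ℝ) ^ S) := by ring
  · rw [← mul_div_assoc, le_div_iff₀ hNS, ← mul_pow]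
    exact (mul_le_mul_of_nonneg_left hDlo (Nat.cast_nonneg q)).trans hqhi'
end
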